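/- Let p ≠ 3 be a prime and let F(x,y,z) = y³ − f(x,z) with f a binary sextic form over F_p. If F is reducible in F̄_p[x,z][y], then f = a·h³ for some a ∈ F_p and some binary quadratic form h over F_p, and F factors as (y − αh)(y − ωαh)(y − ω²αh) where α³ = a and ω is a primitive third root of unity in F_{p²}. Consequently, the number of coefficient vectors (c_0,…,c_6) ∈ F_p^7 for which F is NOT absolutely irreducible is exactly p³. -/

import Mathlib

/-- The binary sextic form `f(x,z) = Σ_{i=0}^{6} cᵢ xⁱ z^{6−i}` over `F_p`. -/
noncomputable def sexticForm (p : ℕ) [Fact p.Prime] (c : Fin 7 → ZMod p) :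
    MvPolynomial (Fin 2) (ZMod p) :=
  ∑ i : Fin 7, MvPolynomial.C (c i) * MvPolynomial.X 0 ^ (i : ℕ) *
    MvPolynomial.X 1 ^ (6 - (i : ℕ))

/-- `F = y³ − f(x,z)`, viewed in `F̄_p[x,z][y]`. -/
noncomputable def sexticCurveBar (p : ℕ) [Fact p.Prime] (c : Fin 7 → ZMod p) :
    Polynomial (MvPolynomial (Fin 2) (AlgebraicClosure (ZMod p))) :=
  Polynomial.X ^ 3 -
    Polynomial.C (MvPolynomial.map (algebraMap (ZMod p) (AlgebraicClosure (ZMod p)))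
      (sexticForm p c))


/-!
`yⁿ - f` of prime degree over the normal domain `F̄[x, z]` is reducible exactly when `f` is an
`n`-th power there. Dehomogenizing, a monic `n`-th root over `F̄` of a polynomial over a perfect
field is unique, hence fixed by the Galois group, hence defined over the base field; so `f` is a
scalar multiple of an `n`-th power over the base field. Each such multiple `a hⁿ`, with `h` monic,
is `ℓ(q)^(1 - n) qⁿ` for the single polynomial `q = a h` with leading coefficient `ℓ(q) = a`.
Counting the forms therefore amounts to counting the polynomials `q` of degree at most `deg f / n`.
-/

open Polynomial

section MonicRoots

lemma eq_of_pow_eq_pow_of_leadingCoeff_eq {R : Type*} [CommRing R] [IsDomain R]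
    [IsIntegrallyClosed R] {p q : R[X]} {n : ℕ} (hn : n ≠ 0) (hpow : p ^ n = q ^ n)
    (hlead : p.leadingCoeff = q.leadingCoeff) : p = q := by
  obtain rfl | hp := eq_or_ne p 0
  · rw [leadingCoeff_zero, eq_comm, leadingCoeff_eq_zero] at hlead
    exact hlead.symm
  obtain ⟨u, rfl⟩ := (Associated.pow_iff hn).1 (Associated.of_eq hpow)
  obtain ⟨r, -, hr⟩ := Polynomial.isUnit_iff.1 u.isUnit
  have hr_one : r = 1 := by simpa [← hr, hp] using hlead
  rw [← hr, hr_one, C_1, mul_one]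

variable {K L : Type*} [Field K] [Field L] [Algebra K L] [IsGalois K L]

lemma exists_map_eq_of_forall_galois {g : L[X]}
    (hg : ∀ σ : Gal(L/K), g.map (σ : L →+* L) = g) :
    ∃ f : K[X], f.map (algebraMap K L) = g := by
  refine (mem_lifts g).1 ((lifts_iff_coeff_lifts g).2 fun i => ?_)
  refine (InfiniteGalois.mem_range_algebraMap_iff_fixed _).2 fun σ => ?_
  simpa using congrArg (coeff · i) (hg σ)

lemma exists_map_eq_of_monic_of_pow_eq_map {f : K[X]} {g : L[X]} {n : ℕ} (hg : g.Monic) (hn : n ≠ 0)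
    (hfg : g ^ n = f.map (algebraMap K L)) : ∃ h : K[X], h.map (algebraMap K L) = g := by
  refine exists_map_eq_of_forall_galois fun σ => ?_
  refine eq_of_pow_eq_pow_of_leadingCoeff_eq hn ?_ ?_
  · have hσ : (σ : L →+* L).comp (algebraMap K L) = algebraMap K L := σ.toAlgHom.comp_algebraMap
    rw [← Polynomial.map_pow, hfg, Polynomial.map_map, hσ]
  · rw [(hg.map _).leadingCoeff, hg.leadingCoeff]

lemma exists_monic_eq_C_mul_pow_of_pow_eq_map {f : K[X]} {g : L[X]} {n : ℕ} (hn : n ≠ 0)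
    (hfg : g ^ n = f.map (algebraMap K L)) :
    ∃ (a : K) (h : K[X]), h.Monic ∧ f = C a * h ^ n := by
  obtain rfl | hf := eq_or_ne f 0
  · exact ⟨0, 1, monic_one, by simp⟩
  have hg : g ≠ 0 := by
    rintro rfl
    rw [zero_pow hn] at hfg
    exact hf ((Polynomial.map_eq_zero _).1 hfg.symm)
  have hlead : g.leadingCoeff ^ n = algebraMap K L f.leadingCoeff := by
    rw [← leadingCoeff_pow, hfg, leadingCoeff_map]
  have hroot : (g * C g.leadingCoeff⁻¹) ^ n =
      (f * C f.leadingCoeff⁻¹).map (algebraMap K L) := by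
    simp [mul_pow, hfg, ← C_pow, hlead]
  have hmonic := monic_mul_leadingCoeff_inv hg
  obtain ⟨h, hh⟩ := exists_map_eq_of_monic_of_pow_eq_map hmonic hn hroot
  have hpow : h ^ n = f * C f.leadingCoeff⁻¹ :=
    map_injective _ (algebraMap K L).injective (by rw [Polynomial.map_pow, hh, hroot])
  refine ⟨f.leadingCoeff, h, monic_map_iff.1 (hh ▸ hmonic), ?_⟩
  rw [hpow, mul_left_comm, ← C_mul, mul_inv_cancel₀ (leadingCoeff_ne_zero.2 hf), C_1, mul_one]

end MonicRoots

lemma natDegree_ofFn_succ_le {R : Type*} [Semiring R] [DecidableEq R] {m : ℕ}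
    (c : Fin (m + 1) → R) : (ofFn (m + 1) c).natDegree ≤ m :=
  Nat.le_of_lt_succ (ofFn_natDegree_lt m.succ_pos c)

section NormalizedPow

variable {K : Type*} [Field K]

/-- The polynomial `a hⁿ`, where `q = a h` with `h` monic. It has the leading coefficient of `q`
and parametrizes the scalar multiples of `n`-th powers without repetition. -/
noncomputable def normalizedPow (n : ℕ) (q : K[X]) : K[X] :=
  C q.leadingCoeff * (q * C q.leadingCoeff⁻¹) ^ n

lemma normalizedPow_C_mul_of_monic (n : ℕ) (a : K) {h : K[X]} (hh : h.Monic) :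
    normalizedPow n (C a * h) = C a * h ^ n := by
  obtain rfl | ha := eq_or_ne a 0
  · simp [normalizedPow]
  · rw [normalizedPow, leadingCoeff_mul, leadingCoeff_C, hh.leadingCoeff, mul_one, mul_right_comm,
      ← C_mul, mul_inv_cancel₀ ha, C_1, one_mul]

lemma leadingCoeff_normalizedPow (n : ℕ) (q : K[X]) :
    (normalizedPow n q).leadingCoeff = q.leadingCoeff := by
  obtain rfl | hq := eq_or_ne q 0
  · simp [normalizedPow]
  · rw [normalizedPow, leadingCoeff_mul, leadingCoeff_C,
      ((monic_mul_leadingCoeff_inv hq).pow n).leadingCoeff, mul_one]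

lemma natDegree_normalizedPow (n : ℕ) (q : K[X]) :
    (normalizedPow n q).natDegree = n * q.natDegree := by
  obtain rfl | hq := eq_or_ne q 0
  · simp [normalizedPow]
  · have hlead := leadingCoeff_ne_zero.2 hq
    rw [normalizedPow, natDegree_C_mul hlead, natDegree_pow, natDegree_mul_C (inv_ne_zero hlead)]

lemma normalizedPow_injective {n : ℕ} (hn : n ≠ 0) :
    Function.Injective (normalizedPow n : K[X] → K[X]) := by
  intro q r hqr
  have hlead : q.leadingCoeff = r.leadingCoeff := by
    rw [← leadingCoeff_normalizedPow n q, hqr, leadingCoeff_normalizedPow]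
  obtain rfl | hq := eq_or_ne q 0
  · rwa [leadingCoeff_zero, eq_comm, leadingCoeff_eq_zero, eq_comm] at hlead
  have hq₀ := leadingCoeff_ne_zero.2 hq
  have hpow : (q * C q.leadingCoeff⁻¹) ^ n = (r * C q.leadingCoeff⁻¹) ^ n := by
    rw [normalizedPow, normalizedPow, ← hlead] at hqr
    exact mul_left_cancel₀ (C_ne_zero.2 hq₀) hqr
  refine mul_right_cancel₀ (C_ne_zero.2 (inv_ne_zero hq₀))
    (eq_of_pow_eq_pow_of_leadingCoeff_eq hn hpow ?_)
  simp [hlead]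

lemma natDegree_le_of_normalizedPow_eq_ofFn [DecidableEq K] {n d : ℕ} (hn : n ≠ 0) {q : K[X]}
    {c : Fin (n * d + 1) → K} (hq : normalizedPow n q = ofFn (n * d + 1) c) : q.natDegree ≤ d := by
  refine Nat.le_of_mul_le_mul_left ?_ (Nat.pos_of_ne_zero hn)
  rw [← natDegree_normalizedPow, hq]
  exact natDegree_ofFn_succ_le c

lemma card_ofFn_mem_range_normalizedPow [DecidableEq K] {n : ℕ} (hn : n ≠ 0) (d : ℕ) :
    Nat.card {c : Fin (n * d + 1) → K // ofFn (n * d + 1) c ∈ Set.range (normalizedPow n)} =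
      Nat.card K ^ (d + 1) := by
  have ofFn_toFn {m : ℕ} {f : K[X]} (hf : f.natDegree ≤ m) : ofFn (m + 1) (toFn (m + 1) f) = f :=
    ofFn_comp_toFn_eq_id_of_natDegree_lt (Nat.lt_succ_of_le hf)
  have ofFn_normalizedPow (v : Fin (d + 1) → K) :
      ofFn (n * d + 1) (toFn (n * d + 1) (normalizedPow n (ofFn (d + 1) v))) =
        normalizedPow n (ofFn (d + 1) v) := by
    refine ofFn_toFn ?_
    rw [natDegree_normalizedPow]
    exact Nat.mul_le_mul_left n (natDegree_ofFn_succ_le v)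
  let e (v : Fin (d + 1) → K) :
      {c : Fin (n * d + 1) → K // ofFn (n * d + 1) c ∈ Set.range (normalizedPow n)} :=
    ⟨toFn _ (normalizedPow n (ofFn _ v)), ofFn _ v, (ofFn_normalizedPow v).symm⟩
  have he : Function.Bijective e := by
    refine ⟨fun v w hvw => ?_, fun ⟨c, q, hq⟩ => ?_⟩
    · refine injective_ofFn _ (normalizedPow_injective hn ?_)
      rw [← ofFn_normalizedPow v, ← ofFn_normalizedPow w]
      exact congrArg (fun c => ofFn _ c.1) hvw
    · have hdeg := natDegree_le_of_normalizedPow_eq_ofFn hn hq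
      refine ⟨toFn _ q, Subtype.ext (injective_ofFn _ ?_)⟩
      rw [ofFn_normalizedPow, ofFn_toFn hdeg, hq]
  rw [← Nat.card_eq_of_bijective e he, Nat.card_fun, Nat.card_fin]

end NormalizedPow

section BinaryForm

/-- The binary form `∑ cᵢ xⁱ z^(m - i)` of degree `m`, with `x = X 0` and `z = X 1`. -/
noncomputable def binaryForm {R : Type*} [CommSemiring R] {m : ℕ} (c : Fin (m + 1) → R) :
    MvPolynomial (Fin 2) R :=
  ∑ i : Fin (m + 1), MvPolynomial.C (c i) * MvPolynomial.X 0 ^ (i : ℕ) *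
    MvPolynomial.X 1 ^ (m - (i : ℕ))

lemma binaryForm_eq_homogenize {R : Type*} [CommSemiring R] [DecidableEq R] {m : ℕ}
    (c : Fin (m + 1) → R) : binaryForm c = (ofFn (m + 1) c).homogenize m := by
  rw [binaryForm, ofFn_eq_sum_monomial, homogenize_finsetSum]
  refine Finset.sum_congr rfl fun i _ => ?_
  rw [← C_mul_X_pow_eq_monomial, homogenize_C_mul, homogenize_X_pow (Nat.le_of_lt_succ i.is_lt),
    mul_assoc]

lemma homogenize_pow {R : Type*} [CommSemiring R] {f : R[X]} {d : ℕ} (hf : f.natDegree ≤ d)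
    (n : ℕ) : (f ^ n).homogenize (n * d) = f.homogenize d ^ n := by
  simpa using homogenize_finsetProd (s := Finset.range n) (p := fun _ => f) (n := fun _ => d)
    fun _ _ => hf

lemma exists_binaryForm_eq_C_mul_pow {K : Type*} [Field K] [DecidableEq K] {n d : ℕ} (hn : n ≠ 0)
    {c : Fin (n * d + 1) → K} (hc : ofFn (n * d + 1) c ∈ Set.range (normalizedPow n)) :
    ∃ (a : K) (h : MvPolynomial (Fin 2) K),
      h.IsHomogeneous d ∧ binaryForm c = MvPolynomial.C a * h ^ n := by
  obtain ⟨q, hq⟩ := hc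
  have hdeg := natDegree_le_of_normalizedPow_eq_ofFn hn hq
  refine ⟨q.leadingCoeff, (q * C q.leadingCoeff⁻¹).homogenize d, isHomogeneous_homogenize _, ?_⟩
  rw [binaryForm_eq_homogenize, ← hq, normalizedPow, homogenize_C_mul,
    homogenize_pow ((natDegree_mul_C_le _ _).trans hdeg)]

end BinaryForm

section Superelliptic

lemma X_pow_sub_C_irreducible_iff_of_prime_of_isIntegrallyClosed {R : Type*} [CommRing R]
    [IsDomain R] [IsIntegrallyClosed R] {n : ℕ} (hn : n.Prime) {a : R} :
    Irreducible (X ^ n - C a) ↔ ∀ b, b ^ n ≠ a := by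
  have hmonic : (X ^ n - C a : R[X]).Monic := monic_X_pow_sub_C a hn.ne_zero
  rw [hmonic.irreducible_iff_irreducible_map_fraction_map (K := FractionRing R),
    Polynomial.map_sub, Polynomial.map_pow, map_X, map_C, X_pow_sub_C_irreducible_iff_of_prime hn]
  refine ⟨fun h b hb => h (algebraMap R _ b) (by rw [← map_pow, hb]), fun h x hx => ?_⟩
  obtain ⟨b, rfl⟩ := IsIntegrallyClosed.exists_algebraMap_eq_of_isIntegral_pow (R := R) hn.pos
    (hx ▸ isIntegral_algebraMap)
  exact h b (IsFractionRing.injective R (FractionRing R) (by rw [map_pow, hx]))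

/-- The polynomial `yⁿ - f(x, z)` over the extension `L` of `K`, for the binary form `f` with
coefficient vector `c`; the main variable is `y`. -/
noncomputable def superellipticPolynomial {K : Type*} (L : Type*) [CommRing K] [CommRing L]
    [Algebra K L] (n : ℕ) {m : ℕ} (c : Fin (m + 1) → K) : (MvPolynomial (Fin 2) L)[X] :=
  X ^ n - C (MvPolynomial.map (algebraMap K L) (binaryForm c))

lemma C_mul_map_pow_eq_map {σ K L : Type*} [CommSemiring K] [CommSemiring L] [Algebra K L] {n : ℕ}
    {f h : MvPolynomial σ K} {a : K} (hf : f = MvPolynomial.C a * h ^ n) {α : L}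
    (hα : α ^ n = algebraMap K L a) :
    (MvPolynomial.C α * MvPolynomial.map (algebraMap K L) h) ^ n =
      MvPolynomial.map (algebraMap K L) f := by
  rw [hf, map_mul, map_pow, MvPolynomial.map_C, mul_pow, ← MvPolynomial.C_pow, hα]

lemma superellipticPolynomial_eq_prod {K L : Type*} [CommRing K] [CommRing L] [IsDomain L]
    [Algebra K L] {n m : ℕ} (hn : 0 < n) {c : Fin (m + 1) → K} {a : K}
    {h : MvPolynomial (Fin 2) K} (hc : binaryForm c = MvPolynomial.C a * h ^ n) {α ω : L}
    (hα : α ^ n = algebraMap K L a) (hω : IsPrimitiveRoot ω n) :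
    superellipticPolynomial L n c = ∏ i ∈ Finset.range n,
      (X - C (MvPolynomial.C (ω ^ i * α) * MvPolynomial.map (algebraMap K L) h)) := by
  rw [superellipticPolynomial, X_pow_sub_C_eq_prod
    (hω.map_of_injective (MvPolynomial.C_injective (Fin 2) L)) hn
    (C_mul_map_pow_eq_map hc hα)]
  simp only [map_mul, map_pow, mul_assoc]

variable {K L : Type*} [Field K] [DecidableEq K] [Field L] [Algebra K L]

lemma ofFn_mem_range_normalizedPow_of_pow_eq_map [IsGalois K L] {n m : ℕ} (hn : n ≠ 0)
    {c : Fin (m + 1) → K} {G : MvPolynomial (Fin 2) L}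
    (hG : G ^ n = MvPolynomial.map (algebraMap K L) (binaryForm c)) :
    ofFn (m + 1) c ∈ Set.range (normalizedPow n) := by
  have hroot : MvPolynomial.aeval ![X, 1] G ^ n = (ofFn (m + 1) c).map (algebraMap K L) := by
    rw [← map_pow, hG, binaryForm_eq_homogenize, ← homogenize_map,
      aeval_homogenize_X_one _ (natDegree_map_le.trans (natDegree_ofFn_succ_le c))]
  obtain ⟨a, h, hh, hc⟩ := exists_monic_eq_C_mul_pow_of_pow_eq_map hn hroot
  exact ⟨C a * h, by rw [normalizedPow_C_mul_of_monic n a hh, hc]⟩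

lemma not_irreducible_superellipticPolynomial_iff [PerfectField K] [IsAlgClosure K L] {n d : ℕ}
    (hn : n.Prime) {c : Fin (n * d + 1) → K} :
    ¬ Irreducible (superellipticPolynomial L n c) ↔
      ofFn (n * d + 1) c ∈ Set.range (normalizedPow n) := by
  have : IsAlgClosed L := IsAlgClosure.isAlgClosed K
  have : IsGalois K L := { }
  rw [superellipticPolynomial, X_pow_sub_C_irreducible_iff_of_prime_of_isIntegrallyClosed hn]
  push Not
  refine ⟨fun ⟨_, hG⟩ => ofFn_mem_range_normalizedPow_of_pow_eq_map hn.ne_zero hG, fun hc => ?_⟩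
  obtain ⟨a, h, -, hform⟩ := exists_binaryForm_eq_C_mul_pow hn.ne_zero hc
  obtain ⟨α, hα⟩ := IsAlgClosed.exists_pow_nat_eq (algebraMap K L a) hn.pos
  exact ⟨_, C_mul_map_pow_eq_map hform hα⟩

end Superelliptic

theorem sextic_reducible_classification_general {K L : Type*} [Field K] [Finite K] [Field L]
    [Algebra K L] [IsAlgClosure K L] {n : ℕ} (hn : n.Prime) (hnK : (n : K) ≠ 0) (d : ℕ) :
    (∀ c : Fin (n * d + 1) → K, ¬ Irreducible (superellipticPolynomial L n c) →
      ∃ (a : K) (h : MvPolynomial (Fin 2) K),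
        h.IsHomogeneous d ∧ binaryForm c = MvPolynomial.C a * h ^ n ∧
        ∃ α ω : L, α ^ n = algebraMap K L a ∧ IsPrimitiveRoot ω n ∧
          superellipticPolynomial L n c = ∏ i ∈ Finset.range n,
            (X - C (MvPolynomial.C (ω ^ i * α) * MvPolynomial.map (algebraMap K L) h))) ∧
    Nat.card {c : Fin (n * d + 1) → K // ¬ Irreducible (superellipticPolynomial L n c)} =
      Nat.card K ^ (d + 1) := by
  classical
  have : IsAlgClosed L := IsAlgClosure.isAlgClosed K
  have : NeZero (n : L) := ⟨by simpa using (map_ne_zero (algebraMap K L)).2 hnK⟩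
  simp only [not_irreducible_superellipticPolynomial_iff hn]
  refine ⟨fun c hc => ?_, card_ofFn_mem_range_normalizedPow hn.ne_zero d⟩
  obtain ⟨a, h, hhom, hform⟩ := exists_binaryForm_eq_C_mul_pow hn.ne_zero hc
  obtain ⟨α, hα⟩ := IsAlgClosed.exists_pow_nat_eq (algebraMap K L a) hn.pos
  obtain ⟨ω, hω⟩ := HasEnoughRootsOfUnity.exists_primitiveRoot L n
  exact ⟨a, h, hhom, hform, α, ω, hα, hω, superellipticPolynomial_eq_prod hn.pos hform hα hω⟩

/-- For `p ≠ 3`: if `F = y³ − f(x,z)` is reducible over `F̄_p`, then `f = a·h³` with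
`a ∈ F_p`, `h` a binary quadratic form over `F_p`, and `F` factors as
`(y − αh)(y − ωαh)(y − ω²αh)` with `α³ = a` and `ω` a primitive cube root of unity.
Moreover exactly `p³` coefficient vectors give a non-absolutely-irreducible `F`. -/
theorem sextic_reducible_classification (p : ℕ) [Fact p.Prime] (hp : p ≠ 3) :
    (∀ c : Fin 7 → ZMod p, ¬ Irreducible (sexticCurveBar p c) →
      ∃ (a : ZMod p) (h : MvPolynomial (Fin 2) (ZMod p)),
        h.IsHomogeneous 2 ∧ sexticForm p c = MvPolynomial.C a * h ^ 3 ∧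
        ∃ (α ω : AlgebraicClosure (ZMod p)),
          α ^ 3 = algebraMap (ZMod p) (AlgebraicClosure (ZMod p)) a ∧
          IsPrimitiveRoot ω 3 ∧
          sexticCurveBar p c =
            (Polynomial.X - Polynomial.C (MvPolynomial.C α *
              MvPolynomial.map (algebraMap (ZMod p) (AlgebraicClosure (ZMod p))) h)) *
            (Polynomial.X - Polynomial.C (MvPolynomial.C (ω * α) *
              MvPolynomial.map (algebraMap (ZMod p) (AlgebraicClosure (ZMod p))) h)) *
            (Polynomial.X - Polynomial.C (MvPolynomial.C (ω ^ 2 * α) *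
              MvPolynomial.map (algebraMap (ZMod p) (AlgebraicClosure (ZMod p))) h))) ∧
    Nat.card {c : Fin 7 → ZMod p // ¬ Irreducible (sexticCurveBar p c)} = p ^ 3 := by
  have := sextic_reducible_classification_general (L := AlgebraicClosure (ZMod p))
    Nat.prime_three (ZMod.prime_ne_zero p 3 hp) 2
  simp only [Finset.prod_range_succ, Finset.prod_range_zero, pow_zero, pow_one, one_mul,
    Nat.card_zmod] at this
  exact this
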